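/- Let L ≥ 2 and θ ∈ ℝ. The self-dual Hamiltonian H_SD(θ) = H_BLBQ(θ) + U_KT H_BLBQ(θ) U_KT satisfies the exact operator identity H_SD(θ) = H_XXZ(θ) + sinθ · Σ_{j=1}^{L−1} ( 2 h_j h_{j+1} + n_j n_{j+1} + 2 ), where H_XXZ(θ) = (cosθ−sinθ) Σ_{j=1}^{L−1} (−σˣ_jσˣ_{j+1} + σʸ_jσʸ_{j+1}) + sinθ Σ_{j=1}^{L−1} σᶻ_jσᶻ_{j+1}. -/

import Mathlib

noncomputable section
open Complex Matrix

/-- The Hilbert space operators of the `L`-site spin-1 chain: matrices on `(ℂ³)^{⊗L}`,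
with the tensor factors indexed by sites and the single-site ordered basis `(|+⟩,|0⟩,|−⟩)`. -/
abbrev Op (L : ℕ) : Type := Matrix (Fin L → Fin 3) (Fin L → Fin 3) ℂ

/-- The spin-1 matrix `Sˣ`. -/
def Sx : Matrix (Fin 3) (Fin 3) ℂ :=
  ((Real.sqrt 2 : ℝ) : ℂ)⁻¹ • !![0, 1, 0; 1, 0, 1; 0, 1, 0]

/-- The spin-1 matrix `Sʸ`. -/
def Sy : Matrix (Fin 3) (Fin 3) ℂ :=
  ((Real.sqrt 2 : ℝ) : ℂ)⁻¹ • !![0, -I, 0; I, 0, -I; 0, I, 0]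

/-- The spin-1 matrix `Sᶻ = diag(1,0,−1)`. -/
def Sz : Matrix (Fin 3) (Fin 3) ℂ := !![1, 0, 0; 0, 0, 0; 0, 0, -1]

/-- `site A j` is the one-site operator `A` acting on site `j` and identity elsewhere. -/
def site {L : ℕ} (A : Matrix (Fin 3) (Fin 3) ℂ) (j : Fin L) : Op L :=
  Matrix.of fun f g => ∏ k : Fin L, if k = j then A (f k) (g k) else (if f k = g k then 1 else 0)

/-- One factor `exp(iπ Sᶻ_u Sˣ_v)` of the Kennedy–Tasaki transformation. -/
def ktFactor {L : ℕ} (u v : Fin L) : Op L :=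
  NormedSpace.exp (((Real.pi : ℂ) * I) • (site Sz u * site Sx v))

/-- The Kennedy–Tasaki transformation `U_KT = ∏_{1 ≤ u < v ≤ L} exp(iπ Sᶻ_u Sˣ_v)`
(the factors pairwise commute, so the ordering is immaterial). -/
def UKT (L : ℕ) : Op L :=
  ((List.finRange L).map fun u =>
    ((List.finRange L).map fun v => if u < v then ktFactor u v else 1).prod).prod

/-- The p-wave basis vector `|↑⟩ = (|+⟩ − |−⟩)/√2`. -/
def up : Fin 3 → ℂ := ![((Real.sqrt 2 : ℝ) : ℂ)⁻¹, 0, -((Real.sqrt 2 : ℝ) : ℂ)⁻¹]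

/-- The p-wave basis vector `|↓⟩ = |0⟩`. -/
def down : Fin 3 → ℂ := ![0, 1, 0]

/-- The p-wave basis vector `|h⟩ = (|+⟩ + |−⟩)/√2`. -/
def hole : Fin 3 → ℂ := ![((Real.sqrt 2 : ℝ) : ℂ)⁻¹, 0, ((Real.sqrt 2 : ℝ) : ℂ)⁻¹]

/-- The rank-one operator `|a⟩⟨b|`. -/
def ketbra (a b : Fin 3 → ℂ) : Matrix (Fin 3) (Fin 3) ℂ := Matrix.vecMulVec a (star b)

/-- `σˣ = |↑⟩⟨↓| + |↓⟩⟨↑|` (annihilating `|h⟩`). -/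
def sigx : Matrix (Fin 3) (Fin 3) ℂ := ketbra up down + ketbra down up

/-- `σʸ = −i|↑⟩⟨↓| + i|↓⟩⟨↑|` (annihilating `|h⟩`). -/
def sigy : Matrix (Fin 3) (Fin 3) ℂ := (-I) • ketbra up down + I • ketbra down up

/-- `σᶻ = |↑⟩⟨↑| − |↓⟩⟨↓|` (annihilating `|h⟩`). -/
def sigz : Matrix (Fin 3) (Fin 3) ℂ := ketbra up up - ketbra down down

/-- `n = |↑⟩⟨↑| + |↓⟩⟨↓|` (annihilating `|h⟩`). -/
def nMat : Matrix (Fin 3) (Fin 3) ℂ := ketbra up up + ketbra down down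

/-- `h = |h⟩⟨h|`. -/
def hMat : Matrix (Fin 3) (Fin 3) ℂ := ketbra hole hole

/-- `P = ⊗_{j=1}^L n_j`, the orthogonal projection onto the hole-free subspace. -/
def Pproj (L : ℕ) : Op L := Matrix.of fun f g => ∏ k : Fin L, nMat (f k) (g k)

/-- The Heisenberg coupling `S_j · S_k`. -/
def heis {L : ℕ} (j k : Fin L) : Op L :=
  site Sx j * site Sx k + site Sy j * site Sy k + site Sz j * site Sz k

/-- The bilinear-biquadratic Hamiltonian
`H_BLBQ(θ) = Σ_{j=1}^{L−1} [cosθ (S_j·S_{j+1}) + sinθ (S_j·S_{j+1})²]`. -/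
def HBLBQ (L : ℕ) (θ : ℝ) : Op L :=
  ∑ j : Fin L, if h : (j : ℕ) + 1 < L then
    ((Real.cos θ : ℝ) : ℂ) • heis j ⟨(j : ℕ) + 1, h⟩
      + ((Real.sin θ : ℝ) : ℂ) • (heis j ⟨(j : ℕ) + 1, h⟩) ^ 2
  else 0

/-- The self-dual Hamiltonian `H_SD(θ) = H_BLBQ(θ) + U_KT H_BLBQ(θ) U_KT`. -/
def HSD (L : ℕ) (θ : ℝ) : Op L := HBLBQ L θ + UKT L * HBLBQ L θ * UKT L

/-- The spin-1/2 XXZ Hamiltonian written in the p-wave basis: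
`H_XXZ(θ) = (cosθ−sinθ) Σ_j (−σˣ_jσˣ_{j+1} + σʸ_jσʸ_{j+1}) + sinθ Σ_j σᶻ_jσᶻ_{j+1}`. -/
def HXXZ (L : ℕ) (θ : ℝ) : Op L :=
  ((Real.cos θ - Real.sin θ : ℝ) : ℂ) •
    (∑ j : Fin L, if h : (j : ℕ) + 1 < L then
      -(site sigx j * site sigx ⟨(j : ℕ) + 1, h⟩) + site sigy j * site sigy ⟨(j : ℕ) + 1, h⟩
    else 0)
  + ((Real.sin θ : ℝ) : ℂ) •
    (∑ j : Fin L, if h : (j : ℕ) + 1 < L then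
      site sigz j * site sigz ⟨(j : ℕ) + 1, h⟩
    else 0)

/-- The global product `∏_{j=1}^L exp(c • A_j)` of commuting single-site exponentials. -/
def globalProd (L : ℕ) (A : Matrix (Fin 3) (Fin 3) ℂ) (c : ℂ) : Op L :=
  ((List.finRange L).map fun j => NormedSpace.exp (c • site A j)).prod

/-- The symmetry flux `F^y_j = exp(−iπ Σ_{k<j} Sʸ_k) · Sʸ_j`. -/
def fluxY (L : ℕ) (j : Fin L) : Op L :=
  NormedSpace.exp ((-((Real.pi : ℂ) * I)) •
    ∑ k : Fin L, if (k : ℕ) < (j : ℕ) then site Sy k else 0) * site Sy j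


section
theorem kt_exp {n : Type*} [Fintype n] [DecidableEq n] (M : Matrix n n ℂ) (hM : M * M * M = M) :
    NormedSpace.exp (((Real.pi : ℂ) * I) • M) = 1 - (2:ℂ) • (M * M) := by
  set p : Matrix n n ℂ := (1/2 : ℂ) • (M * M + M) with hp
  set q : Matrix n n ℂ := (1/2 : ℂ) • (M * M - M) with hq
  set r : Matrix n n ℂ := 1 - M * M with hr
  have hpow : ∀ m : ℕ, M ^ m = p + (-1 : ℂ) ^ m • q + (0:ℂ) ^ m • r := by
    intro m
    induction m with
    | zero => simp only [pow_zero, hp, hq, hr]; module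
    | succ m ih =>
      have h1 : p * M = p := by
        simp only [hp, smul_mul_assoc, add_mul, hM]; module
      have h2 : q * M = - q := by
        simp only [hq, smul_mul_assoc, sub_mul, hM]; module
      have h3 : r * M = 0 := by
        simp only [hr, sub_mul, hM, one_mul, sub_self]
      rw [pow_succ, ih, add_mul, add_mul, h1, smul_mul_assoc ((-1:ℂ)^m) q, smul_mul_assoc ((0:ℂ)^m) r, h2, h3]
      simp [pow_succ]
  have hs : ∀ z : ℂ, HasSum (fun m : ℕ => ((m.factorial : ℂ)⁻¹ * z ^ m)) (Complex.exp z) := by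
    intro z
    have := NormedSpace.expSeries_div_hasSum_exp (𝔸 := ℂ) z
    rw [← Complex.exp_eq_exp_ℂ] at this
    simpa [div_eq_inv_mul] using this
  set c : ℂ := (Real.pi : ℂ) * I with hc
  have e1 : Complex.exp c = -1 := Complex.exp_pi_mul_I
  have e2 : Complex.exp (-c) = -1 := by rw [Complex.exp_neg, e1]; norm_num
  have H := (((hs c).smul_const p).add ((hs (-c)).smul_const q)).add ((hs 0).smul_const r)
  rw [NormedSpace.exp_eq_tsum ℂ]
  have hf : (fun m : ℕ => ((m.factorial : ℂ)⁻¹) • (c • M) ^ m) = fun m : ℕ =>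
      ((m.factorial : ℂ)⁻¹ * c ^ m) • p + ((m.factorial : ℂ)⁻¹ * (-c) ^ m) • q
        + ((m.factorial : ℂ)⁻¹ * 0 ^ m) • r := by
    funext m
    rw [smul_pow, hpow]
    rcases Nat.eq_zero_or_pos m with h | h
    · subst h; simp
    · rw [zero_pow (by omega), neg_pow c]
      module
  simp only [hf]
  rw [H.tsum_eq, e1, e2, Complex.exp_zero, hp, hq, hr]
  module

theorem list_split {M : Type*} [Monoid M] {L : ℕ} (S : Submonoid M) (f : Fin L → M)
    (j : Fin L) (hj : (j:ℕ) + 1 < L)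
    (hf : ∀ v, v ≠ j → v ≠ ⟨j+1, hj⟩ → f v ∈ S) :
    ∃ a ∈ S, ∃ c ∈ S, ((List.finRange L).map f).prod = a * (f j * f ⟨j+1, hj⟩) * c := by
  have hl : List.finRange L = (List.finRange L).take j ++ j :: ⟨j+1, hj⟩ ::
      (List.finRange L).drop (j+2) := by
    apply List.ext_getElem
    · simp; omega
    · intro n h1 h2
      simp only [List.getElem_append, List.getElem_cons, List.length_take, List.length_finRange]
      simp at h1
      split_ifs with h3 h4 h5
      · simp
      · ext; simp; omega
      · ext; simp; omega
      · ext; simp; omega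
  refine ⟨(((List.finRange L).take j).map f).prod, ?_,
    (((List.finRange L).drop (j+2)).map f).prod, ?_, ?_⟩
  · apply S.list_prod_mem
    intro x hx
    obtain ⟨v, hv, rfl⟩ := List.mem_map.1 hx
    obtain ⟨i, hi, rfl⟩ := List.mem_iff_getElem.1 hv
    simp at hi
    apply hf <;> · simp [Fin.ext_iff]; omega
  · apply S.list_prod_mem
    intro x hx
    obtain ⟨v, hv, rfl⟩ := List.mem_map.1 hx
    obtain ⟨i, hi, rfl⟩ := List.mem_iff_getElem.1 hv
    simp at hi
    apply hf <;> · simp [Fin.ext_iff]; omega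
  · conv_lhs => rw [hl]
    simp [mul_assoc]

theorem list_prod_mul' {M ι : Type*} [Monoid M] (f g : ι → M) (h : ∀ u v, Commute (f u) (g v))
    (l : List ι) : (l.map fun v => f v * g v).prod = (l.map f).prod * (l.map g).prod := by
  induction l with
  | nil => simp
  | cons a l ih =>
    simp only [List.map_cons, List.prod_cons, ih]
    have : Commute (g a) (l.map f).prod := by
      apply Commute.list_prod_right
      intro x hx
      obtain ⟨v, _, rfl⟩ := List.mem_map.1 hx
      exact (h v a).symm
    rw [mul_assoc, mul_assoc, ← mul_assoc (g a), this.eq, mul_assoc]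

/-- The double ordered product. -/
def dprod {M : Type*} [Monoid M] {L : ℕ} (K : Fin L → Fin L → M) : M :=
  ((List.finRange L).map fun u => ((List.finRange L).map fun v => K u v).prod).prod

theorem list_invol {M : Type*} [Monoid M] (T : Submonoid M)
    (hT : ∀ x ∈ T, ∀ y ∈ T, Commute x y) (l : List M) (hl : ∀ x ∈ l, x ∈ T ∧ x * x = 1) :
    l.prod ∈ T ∧ l.prod * l.prod = 1 := by
  induction l with
  | nil => simp [T.one_mem]
  | cons a l ih =>
    obtain ⟨h1, h2⟩ := ih (fun x hx => hl x (by simp [hx]))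
    obtain ⟨h3, h4⟩ := hl a (by simp)
    refine ⟨by simpa using T.mul_mem h3 h1, ?_⟩
    rw [List.prod_cons, (hT _ h1 _ h3).mul_mul_mul_comm, h4, h2, one_mul]

theorem dprod_conj {M : Type*} [Monoid M] {L : ℕ} (K : Fin L → Fin L → M)
    (hc : ∀ u v u' v', Commute (K u v) (K u' v')) (hi : ∀ u v, K u v * K u v = 1)
    (B : M) (j : Fin L) (hj : (j:ℕ) + 1 < L)
    (h0 : ∀ u v, v ≤ u → K u v = 1)
    (h1 : ∀ u v, u ≠ j → u ≠ ⟨j+1, hj⟩ → v ≠ j → v ≠ ⟨j+1, hj⟩ → Commute (K u v) B)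
    (h2 : ∀ u, u < j → Commute (K u j * K u ⟨j+1, hj⟩) B)
    (h3 : ∀ v, ⟨j+1, hj⟩ < v → Commute (K j v * K ⟨j+1, hj⟩ v) B) :
    dprod K * B * dprod K = K j ⟨j+1, hj⟩ * B * K j ⟨j+1, hj⟩ := by
  set k : Fin L := ⟨j+1, hj⟩ with hk
  have hjk : j < k := by simp [hk, Fin.lt_def]
  set G : Set M := Set.range (fun p : Fin L × Fin L => K p.1 p.2) with hG
  set T : Submonoid M := Submonoid.centralizer (Submonoid.centralizer G : Set M) with hTdef
  have hKC : ∀ u v, K u v ∈ Submonoid.centralizer G := by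
    intro u v
    rw [Submonoid.mem_centralizer_iff]
    rintro _ ⟨p, rfl⟩
    exact (hc _ _ _ _)
  have hKT : ∀ u v, K u v ∈ T := by
    intro u v
    rw [Submonoid.mem_centralizer_iff]
    intro x hx
    exact ((Submonoid.mem_centralizer_iff.1 hx) (K u v) ⟨(u,v), rfl⟩).symm
  have hT : ∀ x ∈ T, ∀ y ∈ T, Commute x y := by
    intro x hx y hy
    have hx' : x ∈ Submonoid.centralizer G := by
      rw [Submonoid.mem_centralizer_iff]
      rintro _ ⟨p, rfl⟩
      exact (Submonoid.mem_centralizer_iff.1 hx) _ (hKC _ _)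
    exact (Submonoid.mem_centralizer_iff.1 hy) _ hx'
  have hU : dprod K * dprod K = 1 := by
    refine (list_invol T hT _ ?_).2
    intro x hx
    obtain ⟨u, _, rfl⟩ := List.mem_map.1 hx
    apply list_invol T hT
    intro x hx
    obtain ⟨v, _, rfl⟩ := List.mem_map.1 hx
    exact ⟨hKT u v, hi u v⟩
  set S : Submonoid M := T ⊓ Submonoid.centralizer {B} with hS
  have hSB : ∀ x, x ∈ S ↔ x ∈ T ∧ Commute x B := by
    intro x
    rw [hS, Submonoid.mem_inf, Submonoid.mem_centralizer_iff (S := {B})]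
    simp only [Set.mem_singleton_iff, forall_eq, Commute, SemiconjBy]
    rw [eq_comm (a := B * x)]
  have hrowT : ∀ u, ((List.finRange L).map fun v => K u v).prod ∈ T := by
    intro u
    apply T.list_prod_mem
    intro x hx
    obtain ⟨v, _, rfl⟩ := List.mem_map.1 hx
    exact hKT u v
  have hrow : ∀ u, u ≠ j → u ≠ k → ((List.finRange L).map fun v => K u v).prod ∈ S := by
    intro u huj huk
    obtain ⟨a, ha, c, hc', e⟩ := list_split S (fun v => K u v) j hj
      (fun v hvj hvk => (hSB _).2 ⟨hKT u v, h1 u v huj huk hvj hvk⟩)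
    rw [e]
    refine S.mul_mem (S.mul_mem ha ?_) hc'
    refine (hSB _).2 ⟨T.mul_mem (hKT _ _) (hKT _ _), ?_⟩
    rcases lt_or_ge u j with h | h
    · exact h2 u h
    · have hku : k ≤ u := by
        have := lt_of_le_of_ne h (Ne.symm huj)
        simp only [hk, Fin.le_def, Fin.lt_def] at *; omega
      show Commute (K u j * K u k) B
      rw [h0 u j h, h0 u k hku]; simp
  obtain ⟨a, ha, c, hc', e⟩ := list_split S (fun u => ((List.finRange L).map fun v => K u v).prod) j hj hrow
  obtain ⟨a', ha', c', hc'', e'⟩ := list_split S (fun v => K j v * K k v) j hj (by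
    intro v hvj hvk
    refine (hSB _).2 ⟨T.mul_mem (hKT _ _) (hKT _ _), ?_⟩
    rcases lt_or_ge k v with h | h
    · exact h3 v h
    · have hvj' : v ≤ j := by
        have := lt_of_le_of_ne h hvk
        simp only [hk, Fin.le_def, Fin.lt_def] at *; omega
      rw [h0 j v hvj', h0 k v h]; simp)
  rw [list_prod_mul' _ _ (fun _ _ => hc _ _ _ _)] at e'
  have e'' : dprod K = a * (a' * K j k * c') * c := by
    unfold dprod
    rw [e]
    rw [← hk, e', ← hk, h0 j j le_rfl, h0 k j hjk.le, h0 k k le_rfl]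
    simp
  obtain ⟨haT, _⟩ := (hSB _).1 ha
  obtain ⟨haT', _⟩ := (hSB _).1 ha'
  set d := a * a' * (c' * c) with hd
  have hdS : d ∈ S := S.mul_mem (S.mul_mem ha ha') (S.mul_mem hc'' hc')
  obtain ⟨hdT, hdB⟩ := (hSB _).1 hdS
  have e3 : dprod K = K j k * d := by
    have : Commute (a * a') (K j k) := hT _ (T.mul_mem haT haT') _ (hKT _ _)
    rw [e'', hd, ← mul_assoc (K j k), ← this.eq]
    simp only [mul_assoc]
  have hdK : Commute d (K j k) := hT _ hdT _ (hKT _ _)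
  have hdd : d * d = 1 := by
    rw [e3, hdK.mul_mul_mul_comm, hi, one_mul] at hU
    exact hU
  rw [e3]
  calc K j k * d * B * (K j k * d) = K j k * (d * B) * (K j k * d) := by simp only [mul_assoc]
    _ = K j k * B * (d * K j k) * d := by rw [hdB.eq]; simp only [mul_assoc]
    _ = K j k * B * K j k * (d * d) := by rw [hdK.eq]; simp only [mul_assoc]
    _ = _ := by rw [hdd, mul_one]
end
section
/-- Pure tensor operator. -/
def tp {L : ℕ} (A : Fin L → Matrix (Fin 3) (Fin 3) ℂ) : Op L :=
  Matrix.of fun f g => ∏ k : Fin L, A k (f k) (g k)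

theorem tp_mul {L : ℕ} (A B : Fin L → Matrix (Fin 3) (Fin 3) ℂ) : tp A * tp B = tp (A * B) := by
  ext f g
  simp only [tp, Matrix.mul_apply, Matrix.of_apply, Pi.mul_apply]
  rw [Finset.prod_univ_sum]
  simp [Finset.prod_mul_distrib]

theorem site_eq_tp {L : ℕ} (A : Matrix (Fin 3) (Fin 3) ℂ) (j : Fin L) :
    site A j = tp (Pi.mulSingle j A) := by
  ext f g
  simp only [tp, site, Matrix.of_apply]
  refine Finset.prod_congr rfl fun k _ => ?_
  by_cases h : k = j
  · subst h; simp
  · simp [h, Matrix.one_apply]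

theorem site_mul {L : ℕ} (A B : Matrix (Fin 3) (Fin 3) ℂ) (j : Fin L) :
    site A j * site B j = site (A * B) j := by
  rw [site_eq_tp, site_eq_tp, site_eq_tp, tp_mul, Pi.mulSingle_mul]

theorem site_comm {L : ℕ} (A B : Matrix (Fin 3) (Fin 3) ℂ) {j k : Fin L} (h : j ≠ k) :
    Commute (site A j) (site B k) := by
  show _ * _ = _ * _
  rw [site_eq_tp, site_eq_tp, tp_mul, tp_mul]
  congr 1
  exact Pi.mulSingle_commute (f := fun _ : Fin L => Matrix (Fin 3) (Fin 3) ℂ) h A B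

theorem site_one {L : ℕ} (j : Fin L) : site 1 j = (1 : Op L) := by
  rw [site_eq_tp, Pi.mulSingle_one]
  ext f g
  simp only [tp, Matrix.of_apply, Pi.one_apply, Matrix.one_apply]
  by_cases h : f = g
  · simp [h]
  · rw [if_neg h]
    obtain ⟨k, hk⟩ := Function.ne_iff.1 h
    exact Finset.prod_eq_zero (Finset.mem_univ k) (by simp [hk])

theorem site_apply {L : ℕ} (A : Matrix (Fin 3) (Fin 3) ℂ) (j : Fin L) (f g : Fin L → Fin 3) :
    site A j f g = A (f j) (g j) * ∏ k ∈ Finset.univ.erase j, (if f k = g k then 1 else 0) := by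
  simp only [site, Matrix.of_apply]
  rw [← Finset.mul_prod_erase _ _ (Finset.mem_univ j)]
  simp only [if_true]
  congr 1
  refine Finset.prod_congr rfl fun k hk => ?_
  rw [if_neg (Finset.ne_of_mem_erase hk)]

theorem site_add {L : ℕ} (A B : Matrix (Fin 3) (Fin 3) ℂ) (j : Fin L) :
    site (A + B) j = site A j + site B j := by
  ext f g
  simp [site_apply, add_mul]

theorem site_smul {L : ℕ} (c : ℂ) (A : Matrix (Fin 3) (Fin 3) ℂ) (j : Fin L) :
    site (c • A) j = c • site A j := by
  ext f g
  simp [site_apply, mul_assoc]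

theorem site_zero {L : ℕ} (j : Fin L) : site 0 j = (0 : Op L) := by
  ext f g
  simp [site_apply]

/-- p-wave basis -/
def pw : Fin 3 → (Fin 3 → ℂ) := ![up, down, hole]

/-- matrix units in the p-wave basis -/
def E (a b : Fin 3) : Matrix (Fin 3) (Fin 3) ℂ := ketbra (pw a) (pw b)

theorem sq2 : ((Real.sqrt 2 : ℝ) : ℂ)⁻¹ * ((Real.sqrt 2 : ℝ) : ℂ)⁻¹ = 1 / 2 := by
  rw [← mul_inv, ← Complex.ofReal_mul, Real.mul_self_sqrt (by norm_num)]
  norm_num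

theorem pw_orth (a b : Fin 3) : star (pw a) ⬝ᵥ pw b = if a = b then 1 else 0 := by
  fin_cases a <;> fin_cases b <;>
    simp [pw, up, down, hole, dotProduct, Fin.sum_univ_three, sq2] <;> norm_num

theorem E_mul (a b c d : Fin 3) : E a b * E c d = if b = c then E a d else 0 := by
  unfold E ketbra
  rw [Matrix.vecMulVec_mul_vecMulVec, pw_orth]
  split_ifs <;> simp

theorem E_apply (a b s t : Fin 3) : E a b s t = pw a s * star (pw b t) := rfl

theorem E_one : E 0 0 + E 1 1 + E 2 2 = 1 := by
  ext a b
  fin_cases a <;> fin_cases b <;>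
    simp [E_apply, pw, up, down, hole, sq2] <;> norm_num

theorem Sx_E : Sx = E 1 2 + E 2 1 := by
  ext a b
  fin_cases a <;> fin_cases b <;>
    simp [Sx, E_apply, pw, up, down, hole]

theorem Sy_E : Sy = (-I) • E 0 1 + I • E 1 0 := by
  ext a b
  fin_cases a <;> fin_cases b <;>
    simp [Sy, E_apply, pw, up, down, hole, mul_comm]

theorem Sz_E : Sz = E 0 2 + E 2 0 := by
  ext a b
  fin_cases a <;> fin_cases b <;>
    simp [Sz, E_apply, pw, up, down, hole, sq2] <;> norm_num

theorem sigx_E : sigx = E 0 1 + E 1 0 := rfl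
theorem sigy_E : sigy = (-I) • E 0 1 + I • E 1 0 := rfl
theorem sigz_E : sigz = E 0 0 + (-1 : ℂ) • E 1 1 := by
  show E 0 0 - E 1 1 = _
  module
theorem nMat_E : nMat = E 0 0 + E 1 1 := rfl
theorem hMat_E : hMat = E 2 2 := rfl

/-- `P = (Sᶻ)²`. -/
def PP : Matrix (Fin 3) (Fin 3) ℂ := E 0 0 + E 2 2
/-- `Q = (Sˣ)²`. -/
def QQ : Matrix (Fin 3) (Fin 3) ℂ := E 1 1 + E 2 2

theorem Sz_sq : Sz * Sz = PP := by
  simp [Sz_E, PP, add_mul, mul_add, E_mul, add_comm]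
theorem Sx_sq : Sx * Sx = QQ := by
  simp [Sx_E, QQ, add_mul, mul_add, E_mul, add_comm]
theorem PP_Sz : PP * Sz = Sz := by
  simp [Sz_E, PP, add_mul, mul_add, E_mul]
theorem QQ_Sx : QQ * Sx = Sx := by
  simp [Sx_E, QQ, add_mul, mul_add, E_mul]
theorem PP_sq : PP * PP = PP := by
  simp [PP, add_mul, mul_add, E_mul]
theorem QQ_sq : QQ * QQ = QQ := by
  simp [QQ, add_mul, mul_add, E_mul]
theorem PQ_comm : Commute PP QQ := by
  show _ * _ = _ * _
  simp [PP, QQ, add_mul, mul_add, E_mul]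

theorem site_pair_mul {L : ℕ} (A B C D : Matrix (Fin 3) (Fin 3) ℂ) {j k : Fin L} (h : j ≠ k) :
    (site A j * site B k) * (site C j * site D k) = site (A * C) j * site (B * D) k := by
  rw [(site_comm C B h).symm.mul_mul_mul_comm, site_mul, site_mul]

theorem kt_eq {L : ℕ} {u v : Fin L} (h : u ≠ v) :
    ktFactor u v = 1 - (2:ℂ) • (site PP u * site QQ v) := by
  unfold ktFactor
  rw [kt_exp, site_pair_mul _ _ _ _ h, Sz_sq, Sx_sq]
  rw [site_pair_mul _ _ _ _ h, site_pair_mul _ _ _ _ h, Sz_sq, Sx_sq, PP_Sz, QQ_Sx]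

/-- Two-site matrix units. -/
def TT {L : ℕ} (j k : Fin L) (a b c d : Fin 3) : Op L := site (E a b) j * site (E c d) k

theorem TT_mul {L : ℕ} {j k : Fin L} (h : j ≠ k) (a b c d a' b' c' d' : Fin 3) :
    TT j k a b c d * TT j k a' b' c' d' =
      if b = a' then (if d = c' then TT j k a b' c d' else 0) else 0 := by
  unfold TT
  rw [site_pair_mul _ _ _ _ h, E_mul, E_mul]
  split_ifs <;> simp [site_zero]

theorem TT_one {L : ℕ} (j k : Fin L) :
    (1 : Op L) = TT j k 0 0 0 0 + TT j k 0 0 1 1 + TT j k 0 0 2 2 + TT j k 1 1 0 0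
      + TT j k 1 1 1 1 + TT j k 1 1 2 2 + TT j k 2 2 0 0 + TT j k 2 2 1 1 + TT j k 2 2 2 2 := by
  have h : (1 : Op L) = site (E 0 0 + E 1 1 + E 2 2) j * site (E 0 0 + E 1 1 + E 2 2) k := by
    rw [E_one, site_one, site_one, one_mul]
  rw [h]
  simp only [site_add, add_mul, mul_add, TT]
  abel

theorem heis_TT {L : ℕ} (j k : Fin L) :
    heis j k = TT j k 1 2 1 2 + TT j k 1 2 2 1 + TT j k 2 1 1 2 + TT j k 2 1 2 1
      + (-1:ℂ) • TT j k 0 1 0 1 + TT j k 0 1 1 0 + TT j k 1 0 0 1 + (-1:ℂ) • TT j k 1 0 1 0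
      + TT j k 0 2 0 2 + TT j k 0 2 2 0 + TT j k 2 0 0 2 + TT j k 2 0 2 0 := by
  unfold heis
  rw [Sx_E, Sy_E, Sz_E]
  simp only [site_add, site_smul]
  simp [add_mul, mul_add, ← TT.eq_1, smul_smul]
  module

/-- The dual bond operator. -/
def heis' {L : ℕ} (j k : Fin L) : Op L :=
  (-1:ℂ) • (TT j k 1 2 1 2 + TT j k 1 2 2 1 + TT j k 2 1 1 2 + TT j k 2 1 2 1
      + TT j k 0 1 0 1 + TT j k 0 1 1 0 + TT j k 1 0 0 1 + TT j k 1 0 1 0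
      + TT j k 0 2 0 2 + TT j k 0 2 2 0 + TT j k 2 0 0 2 + TT j k 2 0 2 0)

/-- The diagonal form of `K`. -/
theorem kt_TT {L : ℕ} {j k : Fin L} (h : j ≠ k) :
    ktFactor j k = TT j k 0 0 0 0 + (-1:ℂ) • TT j k 0 0 1 1 + (-1:ℂ) • TT j k 0 0 2 2
      + TT j k 1 1 0 0 + TT j k 1 1 1 1 + TT j k 1 1 2 2 + TT j k 2 2 0 0
      + (-1:ℂ) • TT j k 2 2 1 1 + (-1:ℂ) • TT j k 2 2 2 2 := by
  rw [kt_eq h, TT_one j k, PP, QQ]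
  simp only [site_add, add_mul, mul_add, ← TT.eq_1]
  module

set_option maxHeartbeats 2000000 in
theorem kt_conj {L : ℕ} {j k : Fin L} (h : j ≠ k) :
    ktFactor j k * heis j k = heis' j k * ktFactor j k := by
  rw [kt_TT h, heis_TT, heis']
  simp [add_mul, mul_add, TT_mul h]
  abel

theorem kt_sq {L : ℕ} {j k : Fin L} (h : j ≠ k) : ktFactor j k * ktFactor j k = 1 := by
  rw [kt_TT h, TT_one j k]
  simp [add_mul, mul_add, TT_mul h]

set_option maxHeartbeats 2000000 in
theorem sq_sum {L : ℕ} {j k : Fin L} (h : j ≠ k) :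
    heis j k ^ 2 + heis' j k ^ 2 =
      site sigx j * site sigx k - site sigy j * site sigy k + site sigz j * site sigz k
      + ((2:ℂ) • (site hMat j * site hMat k) + site nMat j * site nMat k + 2) := by
  have h2 : (2 : Op L) = (2:ℂ) • (1 : Op L) := by rw [two_smul, one_add_one_eq_two]
  rw [h2, TT_one j k, heis_TT, heis', sigx_E, sigy_E, sigz_E, hMat_E, nMat_E, pow_two, pow_two]
  simp only [site_add, site_smul]
  simp [add_mul, mul_add, TT_mul h, ← TT.eq_1, smul_smul]
  module

theorem lin_sum {L : ℕ} (j k : Fin L) :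
    heis j k + heis' j k = -(site sigx j * site sigx k) + site sigy j * site sigy k := by
  rw [heis_TT, heis', sigx_E, sigy_E]
  simp only [site_add, site_smul]
  simp [add_mul, mul_add, ← TT.eq_1, smul_smul]
  module

theorem site_left {L : ℕ} (A : Matrix (Fin 3) (Fin 3) ℂ) (j k : Fin L) :
    site A j = site A j * site (E 0 0 + E 1 1 + E 2 2) k := by
  rw [E_one, site_one, mul_one]
theorem site_right {L : ℕ} (A : Matrix (Fin 3) (Fin 3) ℂ) (j k : Fin L) :
    site A k = site (E 0 0 + E 1 1 + E 2 2) j * site A k := by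
  rw [E_one, site_one, one_mul]

theorem commQ {L : ℕ} {j k : Fin L} (h : j ≠ k) :
    Commute (site QQ j + site QQ k - (2:ℂ) • (site QQ j * site QQ k)) (heis j k) := by
  have e : site QQ j + site QQ k - (2:ℂ) • (site QQ j * site QQ k)
      = TT j k 0 0 1 1 + TT j k 0 0 2 2 + TT j k 1 1 0 0 + TT j k 2 2 0 0 := by
    have e1 := site_left QQ j k
    have e2 := site_right QQ j k
    simp only [QQ, site_add, add_mul, mul_add, ← TT.eq_1] at e1 e2 ⊢
    rw [e1, e2]
    module
  rw [e, heis_TT]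
  show _ * _ = _ * _
  simp [add_mul, mul_add, TT_mul h]
  try abel

theorem commP {L : ℕ} {j k : Fin L} (h : j ≠ k) :
    Commute (site PP j + site PP k - (2:ℂ) • (site PP j * site PP k)) (heis j k) := by
  have e : site PP j + site PP k - (2:ℂ) • (site PP j * site PP k)
      = TT j k 1 1 0 0 + TT j k 1 1 2 2 + TT j k 0 0 1 1 + TT j k 2 2 1 1 := by
    have e1 := site_left PP j k
    have e2 := site_right PP j k
    simp only [PP, site_add, add_mul, mul_add, ← TT.eq_1] at e1 e2 ⊢
    rw [e1, e2]
    module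
  rw [e, heis_TT]
  show _ * _ = _ * _
  simp [add_mul, mul_add, TT_mul h]
  try abel

theorem site_heis {L : ℕ} (A : Matrix (Fin 3) (Fin 3) ℂ) {u j k : Fin L} (hj : u ≠ j)
    (hk : u ≠ k) : Commute (site A u) (heis j k) := by
  unfold heis
  exact (((site_comm _ _ hj).mul_right (site_comm _ _ hk)).add_right
    ((site_comm _ _ hj).mul_right (site_comm _ _ hk))).add_right
    ((site_comm _ _ hj).mul_right (site_comm _ _ hk))

theorem site_comm' {L : ℕ} (A B : Matrix (Fin 3) (Fin 3) ℂ) (h : Commute A B) (j k : Fin L) :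
    Commute (site A j) (site B k) := by
  by_cases hjk : j = k
  · subst hjk
    show _ * _ = _ * _
    rw [site_mul, site_mul, h.eq]
  · exact site_comm _ _ hjk

/-- guarded factor -/
def KK {L : ℕ} (u v : Fin L) : Op L := if u < v then ktFactor u v else 1

theorem KK_comm {L : ℕ} (u v u' v' : Fin L) : Commute (KK u v) (KK u' v') := by
  unfold KK
  split_ifs with h1 h2 h2
  · rw [kt_eq h1.ne, kt_eq h2.ne]
    have : Commute (site PP u * site QQ v) (site PP u' * site QQ v') :=
      ((site_comm' _ _ (Commute.refl _) _ _).mul_right (site_comm' _ _ PQ_comm _ _)).mul_left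
      ((site_comm' _ _ PQ_comm.symm _ _).mul_right (site_comm' _ _ (Commute.refl _) _ _))
    exact ((Commute.one_left _).sub_left
      (((Commute.one_right _).sub_right (this.smul_right _)).smul_left _))
  · exact Commute.one_right _
  · exact Commute.one_left _
  · exact Commute.one_left _

theorem KK_sq {L : ℕ} (u v : Fin L) : KK u v * KK u v = 1 := by
  unfold KK
  split_ifs with h
  · exact kt_sq h.ne
  · simp

theorem double {L : ℕ} (p q r : Op L) (hp : p * p = p) (hpq : Commute p q) :
    (1 - (2:ℂ) • (p * q)) * (1 - (2:ℂ) • (p * r)) = 1 - (2:ℂ) • (p * (q + r - (2:ℂ) • (q * r))) := by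
  have : p * q * (p * r) = p * (q * r) := by
    rw [hpq.eq, mul_assoc, ← mul_assoc p p, hp, ← mul_assoc, ← hpq.eq, mul_assoc]
  simp only [sub_mul, mul_sub, one_mul, mul_one, smul_mul_assoc, mul_smul_comm, this, mul_add]
  module

theorem bond_conj {L : ℕ} (B : Op L) (j : Fin L) (hj : (j:ℕ) + 1 < L)
    (hB : ∀ x : Op L, Commute x (heis j ⟨j+1, hj⟩) → Commute x B) :
    UKT L * B * UKT L = ktFactor j ⟨j+1, hj⟩ * B * ktFactor j ⟨j+1, hj⟩ := by
  have hjk : j < ⟨j+1, hj⟩ := by simp [Fin.lt_def]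
  have hU : UKT L = dprod (KK (L := L)) := rfl
  have := dprod_conj (KK (L := L)) KK_comm KK_sq B j hj
    (fun u v h => if_neg (not_lt.2 h)) ?_ ?_ ?_
  · rw [hU, this, KK, if_pos hjk]
  · intro u v h1 h2 h3 h4
    unfold KK
    split_ifs with h
    · apply hB
      rw [kt_eq h.ne]
      exact (Commute.one_left _).sub_left
        (((site_heis _ h1 h2).mul_left (site_heis _ h3 h4)).smul_left _)
    · exact Commute.one_left _
  · intro u hu
    apply hB
    have hu' := hu.trans hjk
    rw [KK, KK, if_pos hu, if_pos hu', kt_eq hu.ne, kt_eq hu'.ne,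
      double _ _ _ (by rw [site_mul, PP_sq]) (site_comm _ _ hu.ne)]
    exact (Commute.one_left _).sub_left
      (((site_heis _ hu.ne hu'.ne).mul_left (commQ hjk.ne)).smul_left _)
  · intro v hv
    apply hB
    have hv' := hjk.trans hv
    rw [KK, KK, if_pos hv, if_pos hv', kt_eq hv.ne, kt_eq hv'.ne,
      (site_comm PP QQ hv.ne).eq, (site_comm PP QQ hv'.ne).eq,
      double _ _ _ (by rw [site_mul, QQ_sq]) (site_comm _ _ hv'.ne')]
    exact (Commute.one_left _).sub_left
      (((site_heis _ hv'.ne' hv.ne').mul_left (commP hjk.ne)).smul_left _)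

theorem bond_id {L : ℕ} (j : Fin L) (hj : (j:ℕ) + 1 < L) (c s : ℂ) :
    (c • heis j ⟨j+1, hj⟩ + s • heis j ⟨j+1, hj⟩ ^ 2) +
      UKT L * (c • heis j ⟨j+1, hj⟩ + s • heis j ⟨j+1, hj⟩ ^ 2) * UKT L =
    (c - s) • (-(site sigx j * site sigx ⟨j+1, hj⟩) + site sigy j * site sigy ⟨j+1, hj⟩)
      + s • (site sigz j * site sigz ⟨j+1, hj⟩)
      + s • ((2:ℂ) • (site hMat j * site hMat ⟨j+1, hj⟩) + site nMat j * site nMat ⟨j+1, hj⟩ + 2)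
      := by
  have hjk : j ≠ ⟨j+1, hj⟩ := by simp [Fin.ext_iff]
  rw [bond_conj _ j hj (fun x hx => (hx.smul_right _).add_right ((hx.pow_right 2).smul_right _))]
  generalize (⟨j+1, hj⟩ : Fin L) = k at *
  have e1 : ktFactor j k * heis j k * ktFactor j k = heis' j k := by
    rw [kt_conj hjk, mul_assoc, kt_sq hjk, mul_one]
  have e2 : ktFactor j k * heis j k ^ 2 * ktFactor j k = heis' j k ^ 2 := by
    rw [pow_two, ← mul_assoc, kt_conj hjk, mul_assoc, mul_assoc, ← mul_assoc (ktFactor j k), e1,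
      pow_two]
  have a1 := lin_sum j k
  have a2 := sq_sum hjk
  rw [mul_add, add_mul, mul_smul_comm, mul_smul_comm, smul_mul_assoc, smul_mul_assoc, e1, e2]
  have : c • heis j k + s • heis j k ^ 2 + (c • heis' j k + s • heis' j k ^ 2)
    = c • (heis j k + heis' j k) + s • (heis j k ^ 2 + heis' j k ^ 2) := by module
  rw [this, a1, a2]
  module

end

/-- The self-dual Hamiltonian satisfies the exact operator identity
`H_SD(θ) = H_XXZ(θ) + sinθ Σ_{j=1}^{L−1} (2 h_j h_{j+1} + n_j n_{j+1} + 2)`. -/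
theorem HSD_exact_identity (L : ℕ) (hL : 2 ≤ L) (θ : ℝ) :
    HSD L θ =
      HXXZ L θ +
        ((Real.sin θ : ℝ) : ℂ) •
          ∑ j : Fin L, if h : (j : ℕ) + 1 < L then
            (2 : ℂ) • (site hMat j * site hMat ⟨(j : ℕ) + 1, h⟩)
              + site nMat j * site nMat ⟨(j : ℕ) + 1, h⟩ + 2
          else 0 := by
  unfold HSD HBLBQ HXXZ
  rw [Finset.mul_sum, Finset.sum_mul, ← Finset.sum_add_distrib, Finset.smul_sum, Finset.smul_sum,
    Finset.smul_sum, ← Finset.sum_add_distrib, ← Finset.sum_add_distrib]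
  refine Finset.sum_congr rfl fun j _ => ?_
  by_cases h : (j : ℕ) + 1 < L
  · simp only [dif_pos h]
    rw [bond_id, Complex.ofReal_sub]
  · simp [dif_neg h]

end
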